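/- Let G be a bounded measurable subset of ℝ² with finite Lebesgue measure |G|. Let u, v : ℝ² → ℝ² be smooth compactly supported vector fields with supports contained in G, and assume div v = 0 everywhere. Then |𝔞(u,u,u−v) − 𝔞(v,v,u−v)| ≤ (√|G|/2) · |u−v|_{1,2}² · |u|_{1,2}. -/

import Mathlib

open MeasureTheory

/-- Partial derivative `∂f/∂x_j` of a scalar field on `ℝ²`. -/
noncomputable def pd (f : EuclideanSpace ℝ (Fin 2) → ℝ) (j : Fin 2)
    (x : EuclideanSpace ℝ (Fin 2)) : ℝ :=
  fderiv ℝ f x (EuclideanSpace.single j 1)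

/-- The Dirichlet (gradient `L²`) norm `|u|_{1,2}` of a vector field on `ℝ²`. -/
noncomputable def dirichletNorm (u : EuclideanSpace ℝ (Fin 2) → Fin 2 → ℝ) : ℝ :=
  Real.sqrt (∫ x, ∑ i : Fin 2, ∑ j : Fin 2, (pd (fun y => u y i) j x) ^ 2)

/-- Divergence `div u = ∂u¹/∂x₁ + ∂u²/∂x₂` of a vector field on `ℝ²`. -/
noncomputable def divergence (u : EuclideanSpace ℝ (Fin 2) → Fin 2 → ℝ)
    (x : EuclideanSpace ℝ (Fin 2)) : ℝ :=
  ∑ j : Fin 2, pd (fun y => u y j) j x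

/-- The trilinear form `𝔞(u,v,w) = ∫ Σ_{i,j} uʲ ∂vⁱ/∂x_j wⁱ dx`. -/
noncomputable def triFormA (u v w : EuclideanSpace ℝ (Fin 2) → Fin 2 → ℝ) : ℝ :=
  ∫ x, ∑ i : Fin 2, ∑ j : Fin 2, u x j * pd (fun y => v y i) j x * w x i

theorem aux_int {X : Type*} [TopologicalSpace X] [MeasurableSpace X] [OpensMeasurableSpace X]
    {μ : Measure X} [IsFiniteMeasureOnCompacts μ] (f g : X → ℝ)
    (hf : HasCompactSupport f) (hg : Continuous g) (h : ∀ x, f x = 0 → g x = 0) :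
    Integrable g μ :=
  hg.integrable_of_hasCompactSupport (hf.mono fun x hx hfx => hx (h x hfx))

theorem aux_oneD (g : ℝ → ℝ) (hg : ContDiff ℝ 1 g) (hc : HasCompactSupport g) (x : ℝ) :
    |g x| ≤ (1/2) * ∫ t, |deriv g t| := by
  have hint : Integrable (fun t => |deriv g t|) :=
    ((hg.continuous_deriv le_rfl).integrable_of_hasCompactSupport hc.deriv).abs
  have h1 := hc.integral_Iic_deriv_eq hg x
  have h2 := hc.integral_Ioi_deriv_eq hg x
  have h3 : |g x| ≤ ∫ t in Set.Iic x, |deriv g t| := by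
    rw [← h1]; exact abs_integral_le_integral_abs
  have h4 : |g x| ≤ ∫ t in Set.Ioi x, |deriv g t| := by
    rw [← abs_neg, ← h2]; exact abs_integral_le_integral_abs
  have h5 := intervalIntegral.integral_Iic_add_Ioi (b := x) hint.integrableOn hint.integrableOn
  linarith

theorem aux_twoD (h : ℝ × ℝ → ℝ) (hh : ContDiff ℝ 1 h) (hc : HasCompactSupport h) :
    ∫ p, h p ^ 2 ≤ (1/4) * ((∫ p, |fderiv ℝ h p (1,0)|) * ∫ p, |fderiv ℝ h p (0,1)|) := by
  have hd : ∀ v : ℝ × ℝ, Integrable (fun p => |fderiv ℝ h p v|) (volume.prod volume) := fun v =>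
    (((hh.continuous_fderiv (by simp)).clm_apply continuous_const).integrable_of_hasCompactSupport
      (hc.fderiv_apply ℝ v)).abs
  have hA : Integrable (fun y : ℝ => ∫ x : ℝ, |fderiv ℝ h (x, y) (1,0)|) :=
    (hd (1,0)).integral_prod_right
  have hB : Integrable (fun x : ℝ => ∫ y : ℝ, |fderiv ℝ h (x, y) (0,1)|) :=
    (hd (0,1)).integral_prod_left
  have hsq : Integrable (fun p => h p ^ 2) :=
    aux_int h _ hc (hh.continuous.pow 2) (fun x hx => by simp [hx])
  have b1 : ∀ x y : ℝ, |h (x, y)| ≤ (1/2) * ∫ t : ℝ, |fderiv ℝ h (t, y) (1,0)| := by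
    intro x y
    have hemb : Topology.IsClosedEmbedding (fun t : ℝ => (t, y)) :=
      Topology.IsClosedEmbedding.of_continuous_injective_isClosedMap (by fun_prop)
        (fun a b hab => by simpa using hab) (isClosedMap_prodMk_right y)
    have := aux_oneD (fun t => h (t, y)) (hh.comp (by fun_prop)) (hc.comp_isClosedEmbedding hemb) x
    convert this using 4 with t
    rw [HasDerivAt.deriv]
    have h2 : HasDerivAt (fun t : ℝ => (t, y)) ((1:ℝ), (0:ℝ)) t :=
      (hasDerivAt_id t).prodMk (hasDerivAt_const t y)
    exact ((hh.differentiable one_ne_zero (t, y)).hasFDerivAt).comp_hasDerivAt t h2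
  have b2 : ∀ x y : ℝ, |h (x, y)| ≤ (1/2) * ∫ t : ℝ, |fderiv ℝ h (x, t) (0,1)| := by
    intro x y
    have hemb : Topology.IsClosedEmbedding (fun t : ℝ => (x, t)) :=
      Topology.IsClosedEmbedding.of_continuous_injective_isClosedMap (by fun_prop)
        (fun a b hab => by simpa using hab) (isClosedMap_prodMk_left x)
    have := aux_oneD (fun t => h (x, t)) (hh.comp (by fun_prop)) (hc.comp_isClosedEmbedding hemb) y
    convert this using 4 with t
    rw [HasDerivAt.deriv]
    have h2 : HasDerivAt (fun t : ℝ => (x, t)) ((0:ℝ), (1:ℝ)) t :=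
      (hasDerivAt_const t x).prodMk (hasDerivAt_id t)
    exact ((hh.differentiable one_ne_zero (x, t)).hasFDerivAt).comp_hasDerivAt t h2
  have e1 : ∫ p, |fderiv ℝ h p (1,0)| = ∫ y : ℝ, ∫ x : ℝ, |fderiv ℝ h (x, y) (1,0)| :=
    integral_prod_symm _ (hd (1,0))
  have e2 : ∫ p, |fderiv ℝ h p (0,1)| = ∫ x : ℝ, ∫ y : ℝ, |fderiv ℝ h (x, y) (0,1)| :=
    integral_prod _ (hd (0,1))
  rw [e1, e2, mul_comm (∫ y : ℝ, ∫ x : ℝ, |fderiv ℝ h (x, y) (1,0)|), ← integral_prod_mul,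
    ← integral_const_mul]
  refine integral_mono hsq ((hB.mul_prod hA).const_mul _) ?_
  rintro ⟨x, y⟩
  have := mul_le_mul (b1 x y) (b2 x y) (abs_nonneg _) ((abs_nonneg _).trans (b1 x y))
  simp only
  rw [← sq, sq_abs] at this
  linarith

theorem aux_sob (f : EuclideanSpace ℝ (Fin 2) → ℝ) (hf : ContDiff ℝ 1 f)
    (hc : HasCompactSupport f) :
    ∫ x, f x ^ 2 ≤ (1/4) * ((∫ x, |pd f 0 x|) * ∫ x, |pd f 1 x|) := by
  let e : EuclideanSpace ℝ (Fin 2) ≃L[ℝ] ℝ × ℝ :=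
    (EuclideanSpace.equiv (Fin 2) ℝ).trans (ContinuousLinearEquiv.finTwoArrow ℝ ℝ)
  have hmp : MeasurePreserving e.symm := by
    have h1 := (volume_preserving_finTwoArrow ℝ).symm
    have h2 := PiLp.volume_preserving_toLp (Fin 2)
    exact h2.comp h1
  have hme : MeasurableEmbedding e.symm := e.symm.toHomeomorph.measurableEmbedding
  have key := aux_twoD (fun p => f (e.symm p)) (hf.comp e.symm.contDiff)
    (hc.comp_homeomorph e.symm.toHomeomorph)
  have hfd : ∀ p v, fderiv ℝ (fun p => f (e.symm p)) p v = fderiv ℝ f (e.symm p) (e.symm v) := by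
    intro p v
    have := ((hf.differentiable one_ne_zero (e.symm p)).hasFDerivAt).comp p
      (e.symm.hasFDerivAt (x := p))
    have h2 := this.fderiv
    simp only [Function.comp_def] at h2
    rw [h2]; rfl
  have s0 : e.symm (1,0) = EuclideanSpace.single 0 1 := by
    ext i; fin_cases i <;> simp [e]
  have s1 : e.symm (0,1) = EuclideanSpace.single 1 1 := by
    ext i; fin_cases i <;> simp [e]
  simp only [hfd, s0, s1] at key
  rw [hmp.integral_comp hme (fun x => f x ^ 2), 
    hmp.integral_comp hme (fun x => |fderiv ℝ f x (EuclideanSpace.single 0 1)|),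
    hmp.integral_comp hme (fun x => |fderiv ℝ f x (EuclideanSpace.single 1 1)|)] at key
  exact key

theorem aux_cs {α : Type*} [MeasurableSpace α] {μ : Measure α} (f g : α → ℝ)
    (hf : Integrable (fun x => f x ^ 2) μ)
    (hg : Integrable (fun x => g x ^ 2) μ) (hfg : Integrable (fun x => f x * g x) μ) :
    (∫ x, f x * g x ∂μ) ^ 2 ≤ (∫ x, f x ^ 2 ∂μ) * ∫ x, g x ^ 2 ∂μ := by
  have h := discrim_le_zero (a := ∫ x, f x ^ 2 ∂μ) (b := 2 * ∫ x, f x * g x ∂μ)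
    (c := ∫ x, g x ^ 2 ∂μ) (fun t => by
      have h0 : 0 ≤ ∫ x, (t * f x + g x) ^ 2 ∂μ := integral_nonneg fun x => sq_nonneg _
      have h1 : ∫ x, (t * f x + g x) ^ 2 ∂μ
          = ∫ x, ((t * t) * f x ^ 2 + (2 * t) * (f x * g x) + g x ^ 2) ∂μ := by
        congr 1; ext x; ring
      have h2 : Integrable (fun x => (t * t) * f x ^ 2 + (2 * t) * (f x * g x)) μ :=
        (hf.const_mul _).add (hfg.const_mul _)
      rw [h1, integral_add h2 hg, integral_add (hf.const_mul _) (hfg.const_mul _), integral_const_mul,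
        integral_const_mul] at h0
      linarith)
  rw [discrim] at h
  nlinarith

theorem aux_amgm {X Y c P Q : ℝ} (hX : X ^ 2 ≤ c * P) (hY : Y ^ 2 ≤ c * Q) : X * Y ≤ c * (P + Q) / 2 := by
  nlinarith [sq_nonneg (X - Y)]

theorem aux_pd_cont (f : EuclideanSpace ℝ (Fin 2) → ℝ) (hf : ContDiff ℝ 1 f) (j : Fin 2) :
    Continuous (pd f j) :=
  (hf.continuous_fderiv (by simp)).clm_apply continuous_const

theorem aux_pd_supp (f : EuclideanSpace ℝ (Fin 2) → ℝ) (hc : HasCompactSupport f) (j : Fin 2) :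
    HasCompactSupport (pd f j) := hc.fderiv_apply ℝ _

theorem aux_poinc (G : Set (EuclideanSpace ℝ (Fin 2)))
    (hG : MeasurableSet G) (hb : Bornology.IsBounded G)
    (f : EuclideanSpace ℝ (Fin 2) → ℝ) (hf : ContDiff ℝ 1 f)
    (hc : HasCompactSupport f) (hfG : tsupport f ⊆ G) :
    ∫ x, f x ^ 2 ≤ (1/8) * (volume G).toReal * ((∫ x, pd f 0 x ^ 2) + ∫ x, pd f 1 x ^ 2) := by
  have key : ∀ j, (∫ x, |pd f j x|) ^ 2 ≤ (volume G).toReal * ∫ x, pd f j x ^ 2 := by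
    intro j
    have hcont := aux_pd_cont f hf j
    have hcs := aux_pd_supp f hc j
    have hz : ∀ x, x ∉ G → pd f j x = 0 := fun x hx => by
      by_contra hne
      exact hx (hfG (tsupport_fderiv_apply_subset ℝ (EuclideanSpace.single j (1:ℝ))
        (subset_tsupport _ hne)))
    have hone : ∀ x, G.indicator (fun _ => (1:ℝ)) x * |pd f j x| = |pd f j x| := by
      intro x
      by_cases hx : x ∈ G
      · simp [hx]
      · simp [hx, hz x hx]
    have hind : (fun x => (G.indicator (fun _ => (1:ℝ)) x) ^ 2) = G.indicator (fun _ => (1:ℝ)) := by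
      ext x; by_cases hx : x ∈ G <;> simp [hx]
    have hi : Integrable (fun x => |pd f j x|) := (hcont.integrable_of_hasCompactSupport hcs).abs
    have := aux_cs (μ := volume) (G.indicator (fun _ => (1:ℝ))) (fun x => |pd f j x|)
      (by rw [hind]; exact (integrable_indicator_iff hG).2 (integrableOn_const hb.measure_lt_top.ne))
      (by simp only [sq_abs]
          exact aux_int _ _ hcs (hcont.pow 2) (fun x hx => by simp [hx]))
      (by simpa only [hone] using hi)
    simp only [hone, sq_abs] at this
    rw [hind, integral_indicator_const _ hG] at this
    simpa [Measure.real] using this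
  have h := aux_sob f hf hc
  have h2 := aux_amgm (key 0) (key 1)
  linarith

theorem aux_pd_g (f0 f1 : EuclideanSpace ℝ (Fin 2) → ℝ) (h0 : ContDiff ℝ 1 f0)
    (h1 : ContDiff ℝ 1 f1) (j : Fin 2) (x : EuclideanSpace ℝ (Fin 2)) :
    pd (fun y => f0 y ^ 2 + f1 y ^ 2) j x = 2 * (f0 x * pd f0 j x + f1 x * pd f1 j x) := by
  have d0 := (h0.differentiable one_ne_zero x).hasFDerivAt
  have d1 := (h1.differentiable one_ne_zero x).hasFDerivAt
  have := ((d0.pow 2).add (d1.pow 2)).fderiv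
  unfold pd
  have e : (fun y => f0 y ^ 2 + f1 y ^ 2) = ((fun x => f0 x ^ 2) + fun x => f1 x ^ 2) := rfl
  rw [e, this]
  simp
  ring

theorem aux_lady (G : Set (EuclideanSpace ℝ (Fin 2)))
    (hG : MeasurableSet G) (hb : Bornology.IsBounded G)
    (f0 f1 : EuclideanSpace ℝ (Fin 2) → ℝ) (h0 : ContDiff ℝ 1 f0) (h1 : ContDiff ℝ 1 f1)
    (c0 : HasCompactSupport f0) (c1 : HasCompactSupport f1)
    (t0 : tsupport f0 ⊆ G) (t1 : tsupport f1 ⊆ G) :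
    ∫ x, (f0 x ^ 2 + f1 x ^ 2) ^ 2 ≤ (1/16) * (volume G).toReal *
      ((∫ x, pd f0 0 x ^ 2) + (∫ x, pd f0 1 x ^ 2) +
        ((∫ x, pd f1 0 x ^ 2) + ∫ x, pd f1 1 x ^ 2)) ^ 2 := by
  have i0 : Integrable (fun x => f0 x ^ 2) :=
    aux_int f0 _ c0 (h0.continuous.pow 2) (fun x hx => by simp [hx])
  have i1 : Integrable (fun x => f1 x ^ 2) :=
    aux_int f1 _ c1 (h1.continuous.pow 2) (fun x hx => by simp [hx])
  have ip0 : ∀ j, Integrable (fun x => pd f0 j x ^ 2) := fun j =>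
    aux_int (pd f0 j) _ (aux_pd_supp f0 c0 j) ((aux_pd_cont f0 h0 j).pow 2)
      (fun x hx => by simp [hx])
  have ip1 : ∀ j, Integrable (fun x => pd f1 j x ^ 2) := fun j =>
    aux_int (pd f1 j) _ (aux_pd_supp f1 c1 j) ((aux_pd_cont f1 h1 j).pow 2)
      (fun x hx => by simp [hx])
  have hg : ContDiff ℝ 1 (fun y => f0 y ^ 2 + f1 y ^ 2) := (h0.pow 2).add (h1.pow 2)
  have k0 : HasCompactSupport (fun y => f0 y ^ 2) :=
    c0.mono fun x hx hfx => hx (by simp [hfx])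
  have k1 : HasCompactSupport (fun y => f1 y ^ 2) :=
    c1.mono fun x hx hfx => hx (by simp [hfx])
  have hgc : HasCompactSupport (fun y => f0 y ^ 2 + f1 y ^ 2) := k0.add k1
  have sob := aux_sob _ hg hgc
  set S := ∫ x, (f0 x ^ 2 + f1 x ^ 2) with hS
  have hSe : S = (∫ x, f0 x ^ 2) + ∫ x, f1 x ^ 2 := integral_add i0 i1
  have hS0 : 0 ≤ S := integral_nonneg fun x => by positivity
  have key : ∀ j, (∫ x, |pd (fun y => f0 y ^ 2 + f1 y ^ 2) j x|) ^ 2 ≤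
      (4 * S) * ((∫ x, pd f0 j x ^ 2) + ∫ x, pd f1 j x ^ 2) := by
    intro j
    have cg : Continuous (fun x => Real.sqrt (f0 x ^ 2 + f1 x ^ 2)) := hg.continuous.sqrt
    have cR : Continuous (fun x => Real.sqrt (pd f0 j x ^ 2 + pd f1 j x ^ 2)) :=
      (((aux_pd_cont f0 h0 j).pow 2).add ((aux_pd_cont f1 h1 j).pow 2)).sqrt
    have ig : Integrable (fun x => Real.sqrt (f0 x ^ 2 + f1 x ^ 2) *
        Real.sqrt (pd f0 j x ^ 2 + pd f1 j x ^ 2)) :=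
      aux_int _ _ hgc (cg.mul cR) (fun x hx => by simp [hx])
    have sg : ∀ x, Real.sqrt (f0 x ^ 2 + f1 x ^ 2) ^ 2 = f0 x ^ 2 + f1 x ^ 2 :=
      fun x => Real.sq_sqrt (by positivity)
    have sR : ∀ x, Real.sqrt (pd f0 j x ^ 2 + pd f1 j x ^ 2) ^ 2 = pd f0 j x ^ 2 + pd f1 j x ^ 2 :=
      fun x => Real.sq_sqrt (by positivity)
    have cs := aux_cs (μ := volume) (fun x => Real.sqrt (f0 x ^ 2 + f1 x ^ 2))
      (fun x => Real.sqrt (pd f0 j x ^ 2 + pd f1 j x ^ 2))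
      (by simp only [sg]; exact i0.add i1) (by simp only [sR]; exact (ip0 j).add (ip1 j)) ig
    simp only [sg, sR] at cs
    rw [integral_add (ip0 j) (ip1 j)] at cs
    have hle : ∫ x, |pd (fun y => f0 y ^ 2 + f1 y ^ 2) j x| ≤
        2 * ∫ x, Real.sqrt (f0 x ^ 2 + f1 x ^ 2) * Real.sqrt (pd f0 j x ^ 2 + pd f1 j x ^ 2) := by
      rw [← integral_const_mul]
      refine integral_mono
        (aux_int _ _ (aux_pd_supp _ hgc j) (aux_pd_cont _ hg j).abs (fun x hx => by simp [hx]))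
        (ig.const_mul 2) ?_
      intro x
      simp only
      rw [aux_pd_g f0 f1 h0 h1, abs_mul, abs_two, ← Real.sqrt_mul (by positivity)]
      gcongr
      apply Real.abs_le_sqrt
      nlinarith [sq_nonneg (f0 x * pd f1 j x - f1 x * pd f0 j x)]
    have hn : 0 ≤ ∫ x, |pd (fun y => f0 y ^ 2 + f1 y ^ 2) j x| :=
      integral_nonneg fun x => abs_nonneg _
    nlinarith
  have am := aux_amgm (key 0) (key 1)
  have p0 := aux_poinc G hG hb f0 h0 c0 t0
  have p1 := aux_poinc G hG hb f1 h1 c1 t1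
  set D := (∫ x, pd f0 0 x ^ 2) + (∫ x, pd f0 1 x ^ 2) +
        ((∫ x, pd f1 0 x ^ 2) + ∫ x, pd f1 1 x ^ 2) with hD
  have hD0 : 0 ≤ D := by
    have hp : ∀ (f : EuclideanSpace ℝ (Fin 2) → ℝ) j, 0 ≤ ∫ x, pd f j x ^ 2 :=
      fun f j => integral_nonneg fun x => sq_nonneg _
    linarith [hp f0 0, hp f0 1, hp f1 0, hp f1 1]
  have hSD : S ≤ (1/8) * (volume G).toReal * D := by rw [hSe, hD]; linarith
  have h3 : ∫ x, (f0 x ^ 2 + f1 x ^ 2) ^ 2 ≤ (1/2) * S * D := by rw [hD]; linarith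
  nlinarith [mul_le_mul_of_nonneg_right hSD hD0]

theorem aux_ibp (v0 v1 g : EuclideanSpace ℝ (Fin 2) → ℝ) (h0 : ContDiff ℝ 1 v0)
    (h1 : ContDiff ℝ 1 v1) (hg : ContDiff ℝ 1 g) (hc : HasCompactSupport g)
    (hd : ∀ x, pd v0 0 x + pd v1 1 x = 0) :
    ∫ x, (v0 x * pd g 0 x + v1 x * pd g 1 x) = 0 := by
  have key : ∀ (v : EuclideanSpace ℝ (Fin 2) → ℝ), ContDiff ℝ 1 v → ∀ j,
      Integrable (fun x => v x * pd g j x) ∧ Integrable (fun x => pd v j x * g x) ∧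
      ∫ x, v x * pd g j x = - ∫ x, pd v j x * g x := by
    intro v hv j
    have a1 : Integrable (fun x => v x * pd g j x) := aux_int _ _ (aux_pd_supp g hc j)
      (hv.continuous.mul (aux_pd_cont g hg j)) (fun x hx => by simp [hx])
    have a2 : Integrable (fun x => pd v j x * g x) := aux_int _ _ hc
      ((aux_pd_cont v hv j).mul hg.continuous) (fun x hx => by simp [hx])
    have a3 : Integrable (fun x => v x * g x) := aux_int _ _ hc
      (hv.continuous.mul hg.continuous) (fun x hx => by simp [hx])
    exact ⟨a1, a2, integral_mul_fderiv_eq_neg_fderiv_mul_of_integrable a2 a1 a3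
      (fun x _ => hv.differentiable one_ne_zero x) (fun x _ => hg.differentiable one_ne_zero x)⟩
  obtain ⟨a1, a2, a3⟩ := key v0 h0 0
  obtain ⟨b1, b2, b3⟩ := key v1 h1 1
  rw [integral_add a1 b1, a3, b3, ← neg_add, ← integral_add a2 b2]
  simp [← add_mul, hd]

theorem aux_pd_sub (f g : EuclideanSpace ℝ (Fin 2) → ℝ) (hf : ContDiff ℝ 1 f)
    (hg : ContDiff ℝ 1 g) (j : Fin 2) (x : EuclideanSpace ℝ (Fin 2)) :
    pd (fun y => f y - g y) j x = pd f j x - pd g j x := by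
  unfold pd
  rw [fderiv_fun_sub (hf.differentiable one_ne_zero x) (hg.differentiable one_ne_zero x)]
  rfl

/-- If `div v = 0` then
`|𝔞(u,u,u−v) − 𝔞(v,v,u−v)| ≤ (√|G|/2)·|u−v|_{1,2}²·|u|_{1,2}`. -/
theorem triFormA_diff_bound_divFree
    (G : Set (EuclideanSpace ℝ (Fin 2)))
    (hGmeas : MeasurableSet G) (hGbdd : Bornology.IsBounded G)
    (u v : EuclideanSpace ℝ (Fin 2) → Fin 2 → ℝ)
    (hu : ContDiff ℝ (⊤ : ℕ∞) u) (hv : ContDiff ℝ (⊤ : ℕ∞) v)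
    (husupp : HasCompactSupport u) (hvsupp : HasCompactSupport v)
    (huG : tsupport u ⊆ G) (hvG : tsupport v ⊆ G)
    (hdiv : ∀ x, divergence v x = 0) :
    |triFormA u u (fun x => u x - v x) - triFormA v v (fun x => u x - v x)| ≤
      Real.sqrt (volume G).toReal / 2 *
        dirichletNorm (fun x => u x - v x) ^ 2 * dirichletNorm u := by
  have hui : ∀ i, ContDiff ℝ 1 (fun x => u x i) := fun i =>
    (contDiff_pi.1 (hu.of_le (by exact_mod_cast le_top))) i
  have hvi : ∀ i, ContDiff ℝ 1 (fun x => v x i) := fun i =>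
    (contDiff_pi.1 (hv.of_le (by exact_mod_cast le_top))) i
  have sui : ∀ i, HasCompactSupport (fun x => u x i) := fun i =>
    husupp.mono fun x hx h => hx (by simp [h])
  have svi : ∀ i, HasCompactSupport (fun x => v x i) := fun i =>
    hvsupp.mono fun x hx h => hx (by simp [h])
  have hwi : ∀ i, ContDiff ℝ 1 (fun x => u x i - v x i) := fun i => (hui i).sub (hvi i)
  have swi : ∀ i, HasCompactSupport (fun x => u x i - v x i) := fun i => (sui i).sub (svi i)
  have twi : ∀ i, tsupport (fun x => u x i - v x i) ⊆ G := by
    intro i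
    refine (closure_minimal (t := tsupport u ∪ tsupport v) ?_
      ((isClosed_tsupport u).union (isClosed_tsupport v))).trans (Set.union_subset huG hvG)
    intro x hx
    by_contra hn
    rw [Set.mem_union, not_or] at hn
    have e1 := image_eq_zero_of_notMem_tsupport hn.1
    have e2 := image_eq_zero_of_notMem_tsupport hn.2
    exact hx (by simp [e1, e2])
  have pw : ∀ i j x, pd (fun y => u y i - v y i) j x
      = pd (fun y => u y i) j x - pd (fun y => v y i) j x :=
    fun i j x => aux_pd_sub _ _ (hui i) (hvi i) j x
  have lady := aux_lady G hGmeas hGbdd _ _ (hwi 0) (hwi 1) (swi 0) (swi 1) (twi 0) (twi 1)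
  have hgd : ContDiff ℝ 1 (fun x => (u x 0 - v x 0) ^ 2 + (u x 1 - v x 1) ^ 2) :=
    ((hwi 0).pow 2).add ((hwi 1).pow 2)
  have k0 : HasCompactSupport (fun x => (u x 0 - v x 0) ^ 2) :=
    (swi 0).mono fun x hx hfx => hx (by simp only at hfx; simp [hfx])
  have k1 : HasCompactSupport (fun x => (u x 1 - v x 1) ^ 2) :=
    (swi 1).mono fun x hx hfx => hx (by simp only at hfx; simp [hfx])
  have hgc : HasCompactSupport (fun x => (u x 0 - v x 0) ^ 2 + (u x 1 - v x 1) ^ 2) := k0.add k1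
  have ibp := aux_ibp _ _ _ (hvi 0) (hvi 1) hgd hgc (fun x => by
    have := hdiv x; simpa [divergence, Fin.sum_univ_two] using this)
  have pu : ∀ i j, Continuous (pd (fun y => u y i) j) := fun i j => aux_pd_cont _ (hui i) j
  have pv : ∀ i j, Continuous (pd (fun y => v y i) j) := fun i j => aux_pd_cont _ (hvi i) j
  have cu : ∀ i, Continuous (fun x => u x i) := fun i => (hui i).continuous
  have cv : ∀ i, Continuous (fun x => v x i) := fun i => (hvi i).continuous
  have su := husupp
  -- integrability of the trilinear integrands
  have iu : Integrable (fun x => ∑ i : Fin 2, ∑ j : Fin 2,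
      u x j * pd (fun y => u y i) j x * (u x - v x) i) := by
    refine integrable_finsetSum _ fun i _ => integrable_finsetSum _ fun j _ => ?_
    exact aux_int _ _ (sui j) (((cu j).mul (pu i j)).mul ((cu i).sub (cv i)))
      (fun x hx => by simp [hx])
  have iv : Integrable (fun x => ∑ i : Fin 2, ∑ j : Fin 2,
      v x j * pd (fun y => v y i) j x * (u x - v x) i) := by
    refine integrable_finsetSum _ fun i _ => integrable_finsetSum _ fun j _ => ?_
    exact aux_int _ _ (svi j) (((cv j).mul (pv i j)).mul ((cu i).sub (cv i)))
      (fun x hx => by simp [hx])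
  have iw : Integrable (fun x => ∑ i : Fin 2, ∑ j : Fin 2,
      (u x j - v x j) * pd (fun y => u y i) j x * (u x i - v x i)) := by
    refine integrable_finsetSum _ fun i _ => integrable_finsetSum _ fun j _ => ?_
    exact aux_int _ _ (swi j) ((((cu j).sub (cv j)).mul (pu i j)).mul ((cu i).sub (cv i)))
      (fun x hx => by simp [hx])
  have ig : Integrable (fun x =>
      v x 0 * pd (fun x => (u x 0 - v x 0) ^ 2 + (u x 1 - v x 1) ^ 2) 0 x +
      v x 1 * pd (fun x => (u x 0 - v x 0) ^ 2 + (u x 1 - v x 1) ^ 2) 1 x) := by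
    refine Integrable.add ?_ ?_
    · exact aux_int _ _ (svi 0) ((cv 0).mul (aux_pd_cont _ hgd 0))
        (fun x hx => by simp [hx])
    · exact aux_int _ _ (svi 1) ((cv 1).mul (aux_pd_cont _ hgd 1))
        (fun x hx => by simp [hx])
  have hred : triFormA u u (fun x => u x - v x) - triFormA v v (fun x => u x - v x) =
      ∫ x, ∑ i : Fin 2, ∑ j : Fin 2,
        (u x j - v x j) * pd (fun y => u y i) j x * (u x i - v x i) := by
    unfold triFormA
    rw [← integral_sub iu iv]
    rw [← add_zero (∫ x, ∑ i : Fin 2, ∑ j : Fin 2,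
        (u x j - v x j) * pd (fun y => u y i) j x * (u x i - v x i)),
      ← mul_zero (1/2 : ℝ), ← ibp, ← integral_const_mul, ← integral_add iw (ig.const_mul _)]
    congr 1
    ext x
    have e := fun j => aux_pd_g _ _ (hwi 0) (hwi 1) j x
    simp only [e, pw, Fin.sum_univ_two, Pi.sub_apply]
    ring
  rw [hred]
  -- Cauchy-Schwarz
  have iU : ∀ i j, Integrable (fun x => pd (fun y => u y i) j x ^ 2) := fun i j =>
    aux_int _ _ (aux_pd_supp _ (sui i) j) ((pu i j).pow 2) (fun x hx => by simp [hx])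
  have iUs : Integrable (fun x => ∑ i : Fin 2, ∑ j : Fin 2, pd (fun y => u y i) j x ^ 2) :=
    integrable_finsetSum _ fun i _ => integrable_finsetSum _ fun j _ => iU i j
  have hU0 : ∀ x, 0 ≤ ∑ i : Fin 2, ∑ j : Fin 2, pd (fun y => u y i) j x ^ 2 := fun x => by
    positivity
  have cK : Continuous (fun x =>
      Real.sqrt (∑ i : Fin 2, ∑ j : Fin 2, pd (fun y => u y i) j x ^ 2)) :=
    (continuous_finsetSum _ fun i _ => continuous_finsetSum _ fun j _ => (pu i j).pow 2).sqrt
  have igK : Integrable (fun x => ((u x 0 - v x 0) ^ 2 + (u x 1 - v x 1) ^ 2) *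
      Real.sqrt (∑ i : Fin 2, ∑ j : Fin 2, pd (fun y => u y i) j x ^ 2)) :=
    aux_int _ _ hgc (hgd.continuous.mul cK) (fun x hx => by simp [hx])
  have cs := aux_cs (μ := volume) (fun x => (u x 0 - v x 0) ^ 2 + (u x 1 - v x 1) ^ 2)
    (fun x => Real.sqrt (∑ i : Fin 2, ∑ j : Fin 2, pd (fun y => u y i) j x ^ 2))
    (aux_int _ _ hgc (hgd.continuous.pow 2) (fun x hx => by simp [hx]))
    (by simp only [Real.sq_sqrt (hU0 _)]; exact iUs) igK
  simp only [Real.sq_sqrt (hU0 _)] at cs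
  have hle : |∫ x, ∑ i : Fin 2, ∑ j : Fin 2,
        (u x j - v x j) * pd (fun y => u y i) j x * (u x i - v x i)| ≤
      ∫ x, ((u x 0 - v x 0) ^ 2 + (u x 1 - v x 1) ^ 2) *
      Real.sqrt (∑ i : Fin 2, ∑ j : Fin 2, pd (fun y => u y i) j x ^ 2) := by
    refine abs_integral_le_integral_abs.trans (integral_mono iw.abs igK ?_)
    intro x
    simp only
    have hg0 : 0 ≤ (u x 0 - v x 0) ^ 2 + (u x 1 - v x 1) ^ 2 := by positivity
    rw [← Real.sqrt_sq hg0, ← Real.sqrt_mul (sq_nonneg _)]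
    apply Real.abs_le_sqrt
    simp only [Fin.sum_univ_two]
    generalize u x 0 - v x 0 = a
    generalize u x 1 - v x 1 = b
    generalize pd (fun y => u y 0) 0 x = p
    generalize pd (fun y => u y 0) 1 x = q
    generalize pd (fun y => u y 1) 0 x = r
    generalize pd (fun y => u y 1) 1 x = s
    nlinarith [sq_nonneg (a * a * q - a * b * p), sq_nonneg (a * a * r - a * b * p),
      sq_nonneg (a * a * s - b * b * p), sq_nonneg (a * b * r - a * b * q),
      sq_nonneg (a * b * s - b * b * q), sq_nonneg (a * b * s - b * b * r)]
  have hDw : dirichletNorm (fun x => u x - v x) ^ 2 =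
      (∫ x, pd (fun y => u y 0 - v y 0) 0 x ^ 2) + (∫ x, pd (fun y => u y 0 - v y 0) 1 x ^ 2) +
      ((∫ x, pd (fun y => u y 1 - v y 1) 0 x ^ 2) +
        ∫ x, pd (fun y => u y 1 - v y 1) 1 x ^ 2) := by
    have iW : ∀ i j, Integrable (fun x => pd (fun y => u y i - v y i) j x ^ 2) := fun i j =>
      aux_int _ _ (aux_pd_supp _ (swi i) j) ((aux_pd_cont _ (hwi i) j).pow 2)
        (fun x hx => by simp [hx])
    unfold dirichletNorm
    rw [Real.sq_sqrt (integral_nonneg fun x => by positivity)]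
    simp only [Pi.sub_apply]
    rw [integral_finsetSum _ fun i _ => integrable_finsetSum _ fun j _ => iW i j]
    simp only [Fin.sum_univ_two]
    rw [integral_add (iW 0 0) (iW 0 1), integral_add (iW 1 0) (iW 1 1)]
  have hDu : dirichletNorm u ^ 2 =
      ∫ x, ∑ i : Fin 2, ∑ j : Fin 2, pd (fun y => u y i) j x ^ 2 := by
    unfold dirichletNorm
    rw [Real.sq_sqrt (integral_nonneg hU0)]
  rw [← hDw] at lady
  rw [← hDu] at cs
  have hDu0 : 0 ≤ dirichletNorm u := Real.sqrt_nonneg _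
  have hV : Real.sqrt (volume G).toReal ^ 2 = (volume G).toReal :=
    Real.sq_sqrt ENNReal.toReal_nonneg
  rw [← hV] at lady
  refine hle.trans (le_of_abs_le (abs_le_of_sq_le_sq (a := ∫ x, ((u x 0 - v x 0) ^ 2 + (u x 1 - v x 1) ^ 2) *
      Real.sqrt (∑ i : Fin 2, ∑ j : Fin 2, pd (fun y => u y i) j x ^ 2)) ?_ (by positivity)))
  refine cs.trans ((mul_le_mul_of_nonneg_right lady (sq_nonneg _)).trans ?_)
  have : 0 ≤ Real.sqrt (volume G).toReal ^ 2 * (dirichletNorm (fun x => u x - v x) ^ 2) ^ 2 *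
    dirichletNorm u ^ 2 := by positivity
  nlinarith
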